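/- There exist constants C > 0 and δ > 0 such that for all x, y ∈ ℝ³ with 0 < |x − y| < δ, |I₀(x,y) − (1/((4π)^{3/2}|x−y|)) ∫_{b|x−y|²}^{∞} e^{−u/4} u^{−1/2} du| ≤ C. -/

import Mathlib

/-!
With `r = |x - y|` and `c = b r²`, the substitution `v = c / u` turns
`∫_c^∞ e^{-v/4} v^{-1/2} dv` into `√c ∫₀¹ e^{-c/(4u)} u^{-3/2} du`, so the comparison term in the
theorem is the integral defining `I₀` with `coth u` and `sinh u` replaced by their leading
behaviour `1/u` and `u` at `0` (`model_integral`). On `(0,1)` one has `0 ≤ coth u - 1/u ≤ u` and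
`0 ≤ 1/u - 1/sinh u ≤ u`; since the exponential is 1-Lipschitz on the negative half-line and
`|x_⊥ - y_⊥|² ≤ r² < 1`, the two integrands differ by at most `(b/4 + 1) u^{-1/2}`
(`kernel_diff_bound`), which is integrable on `(0,1)` with a bound independent of `x` and `y`.
-/

open MeasureTheory Set

/-- `|x_⊥ - y_⊥|²` for `x, y ∈ ℝ³`. -/
noncomputable def perpSq (x y : EuclideanSpace ℝ (Fin 3)) : ℝ :=
  (x 0 - y 0) ^ 2 + (x 1 - y 1) ^ 2

/-- The integrand `exp(-(b/4)[(x₃-y₃)²/u + coth(u)|x_⊥-y_⊥|²]) / (u^{1/2} sinh u)`. -/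
noncomputable def kerInt (b : ℝ) (x y : EuclideanSpace ℝ (Fin 3)) (u : ℝ) : ℝ :=
  Real.exp (-(b / 4) * ((x 2 - y 2) ^ 2 / u + Real.cosh u / Real.sinh u * perpSq x y)) /
    (Real.sqrt u * Real.sinh u)

/-- `I₀(x,y) = (b^{1/2}/(4π)^{3/2}) ∫₀¹ kerInt b x y u du`. -/
noncomputable def I0 (b : ℝ) (x y : EuclideanSpace ℝ (Fin 3)) : ℝ :=
  Real.sqrt b / (4 * Real.pi) ^ ((3 : ℝ) / 2) * ∫ u in Ioo (0 : ℝ) 1, kerInt b x y u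

/-- `I_∞(x,y) = (b^{1/2}/(4π)^{3/2}) ∫₁^∞ kerInt b x y u du`. -/
noncomputable def IInf (b : ℝ) (x y : EuclideanSpace ℝ (Fin 3)) : ℝ :=
  Real.sqrt b / (4 * Real.pi) ^ ((3 : ℝ) / 2) * ∫ u in Ici (1 : ℝ), kerInt b x y u

lemma sinh_le_mul_cosh {u : ℝ} (hu : 0 ≤ u) : Real.sinh u ≤ u * Real.cosh u := by
  have hd : ∀ t : ℝ, HasDerivAt (fun t => t * Real.cosh t - Real.sinh t) (t * Real.sinh t) t := by
    intro t
    have := ((hasDerivAt_id t).mul (Real.hasDerivAt_cosh t)).sub (Real.hasDerivAt_sinh t)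
    refine this.congr_deriv ?_
    simp
  have hm : MonotoneOn (fun t => t * Real.cosh t - Real.sinh t) (Ici (0 : ℝ)) := by
    apply monotoneOn_of_deriv_nonneg (convex_Ici 0)
    · exact fun t _ => (hd t).continuousAt.continuousWithinAt
    · exact fun t _ => (hd t).differentiableAt.differentiableWithinAt
    · intro t ht
      rw [interior_Ici] at ht
      rw [(hd t).deriv]
      exact mul_nonneg (le_of_lt ht) (Real.sinh_nonneg_iff.2 (le_of_lt ht))
  have := hm (mem_Ici.2 le_rfl) (mem_Ici.2 hu) hu
  simp at this
  linarith

lemma cosh_le_one_add_mul_sinh {u : ℝ} (hu : 0 ≤ u) : Real.cosh u ≤ 1 + u * Real.sinh u := by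
  -- Half-angle formulas reduce this to `sinh_le_mul_cosh` at `u / 2`.
  have h1 := sinh_le_mul_cosh (u := u / 2) (by linarith)
  have h2 : Real.cosh u = 1 + 2 * Real.sinh (u / 2) ^ 2 := by
    have h := Real.cosh_two_mul (u / 2)
    rw [Real.cosh_sq, mul_div_cancel₀ u (two_ne_zero)] at h
    linarith
  have h3 : Real.sinh u = 2 * Real.sinh (u / 2) * Real.cosh (u / 2) := by
    rw [← Real.sinh_two_mul, mul_div_cancel₀ u (two_ne_zero)]
  have h4 : 0 ≤ Real.sinh (u / 2) := Real.sinh_nonneg_iff.2 (by linarith)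
  have h5 := Real.cosh_pos (u / 2)
  rw [h2, h3]
  have := mul_le_mul_of_nonneg_left h1 h4
  have h6 : 0 ≤ u * (Real.sinh (u / 2) * Real.cosh (u / 2)) := by positivity
  nlinarith

lemma coth_bounds {u : ℝ} (hu : 0 < u) :
    1 / u ≤ Real.cosh u / Real.sinh u ∧ Real.cosh u / Real.sinh u ≤ 1 / u + u := by
  have hs : 0 < Real.sinh u := Real.sinh_pos_iff.2 hu
  have h1 := sinh_le_mul_cosh hu.le
  have h2 := cosh_le_one_add_mul_sinh hu.le
  have h3 := Real.self_le_sinh_iff.2 hu.le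
  constructor
  · rw [div_le_div_iff₀ hu hs]; linarith
  · have : 1 / u + u = (1 + u ^ 2) / u := by field_simp
    rw [this, div_le_div_iff₀ hs hu]
    nlinarith

lemma inv_sinh_bounds {u : ℝ} (hu : 0 < u) :
    1 / Real.sinh u ≤ 1 / u ∧ 1 / u - 1 / Real.sinh u ≤ u := by
  have hs : 0 < Real.sinh u := Real.sinh_pos_iff.2 hu
  have h1 := sinh_le_mul_cosh hu.le
  have h2 := cosh_le_one_add_mul_sinh hu.le
  have h3 := Real.self_le_sinh_iff.2 hu.le
  refine ⟨one_div_le_one_div_of_le hu h3, ?_⟩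
  rw [div_sub_div _ _ hu.ne' hs.ne', div_le_iff₀ (by positivity)]
  nlinarith

/-- Pointwise comparison of the kernel with its small-`u` model; here `z` stands for
`(x₃ - y₃)²` and `p` for `|x_⊥ - y_⊥|²`. -/
lemma kernel_diff_bound {b z p u : ℝ} (hb : 0 < b) (hz : 0 ≤ z) (hp : 0 ≤ p) (hp1 : p ≤ 1)
    (hu : 0 < u) (hu1 : u < 1) :
    |Real.exp (-(b / 4) * (z / u + Real.cosh u / Real.sinh u * p)) / (Real.sqrt u * Real.sinh u)
      - Real.exp (-(b * (z + p) / u) / 4) / (Real.sqrt u * u)| ≤ (b / 4 + 1) / Real.sqrt u := by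
  have hs : 0 < Real.sinh u := Real.sinh_pos_iff.2 hu
  have hq : 0 < Real.sqrt u := Real.sqrt_pos.2 hu
  obtain ⟨c1, c2⟩ := coth_bounds hu
  obtain ⟨s1, s2⟩ := inv_sinh_bounds hu
  set k := Real.cosh u / Real.sinh u
  set A := -(b / 4) * (z / u + k * p) with hA
  set B := -(b * (z + p) / u) / 4 with hB
  set w := 1 / Real.sinh u with hw
  have hw0 : 0 < w := by positivity
  have hBA : B - A = b / 4 * ((k - 1 / u) * p) := by rw [hA, hB]; ring
  have hB0 : B ≤ 0 := by
    have : 0 ≤ b * (z + p) / u := by positivity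
    rw [hB]; linarith
  have hkp : 0 ≤ (k - 1 / u) * p := mul_nonneg (by linarith) hp
  have hkp' : (k - 1 / u) * p ≤ u := by nlinarith
  have hAB : A ≤ B := by nlinarith
  have hBA' : B - A ≤ b / 4 * u := by rw [hBA]; gcongr
  have e1 : Real.exp A ≤ Real.exp B := Real.exp_le_exp.2 hAB
  have e2 : Real.exp B ≤ 1 := Real.exp_le_one_iff.2 hB0
  have e3 : Real.exp B - Real.exp A ≤ b / 4 * u := by
    -- `e^B - e^A = e^B (1 - e^{A-B}) ≤ B - A`.
    have h := Real.add_one_le_exp (A - B)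
    have h' : Real.exp A = Real.exp B * Real.exp (A - B) := by
      rw [← Real.exp_add]; congr 1; ring
    have hpB := Real.exp_pos B
    nlinarith
  have eA := Real.exp_pos A
  have heq : Real.exp A / (Real.sqrt u * Real.sinh u) - Real.exp B / (Real.sqrt u * u)
      = -(((Real.exp B - Real.exp A) * w + Real.exp B * (1 / u - w)) / Real.sqrt u) := by
    rw [hw]; field_simp; ring
  have n1 : 0 ≤ (Real.exp B - Real.exp A) * w := mul_nonneg (by linarith) hw0.le
  have n2 : 0 ≤ Real.exp B * (1 / u - w) := mul_nonneg (Real.exp_pos _).le (by linarith)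
  rw [heq, abs_neg, abs_of_nonneg (by positivity)]
  gcongr
  · calc (Real.exp B - Real.exp A) * w ≤ (b / 4 * u) * (1 / u) := by gcongr
      _ = b / 4 := by field_simp
  · nlinarith

lemma image_const_div {c : ℝ} (hc : 0 < c) : (fun u : ℝ => c / u) '' Ioo 0 1 = Ioi c := by
  ext v
  simp only [mem_image, mem_Ioo, mem_Ioi]
  constructor
  · rintro ⟨u, ⟨h0, h1⟩, rfl⟩
    rw [lt_div_iff₀ h0]; nlinarith
  · intro hv
    have hv0 := hc.trans hv
    exact ⟨c / v, ⟨by positivity, (div_lt_one hv0).2 hv⟩, by field_simp⟩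

/-- The substitution `v = c / u`. Integrability on `(0,1)` of the model kernel comes with it, being
equivalent to that of `e^{-v/4} v^{-1/2}` on `(c,∞)`. -/
lemma model_integral {c : ℝ} (hc : 0 < c) :
    IntegrableOn (fun u => Real.exp (-(c / u) / 4) / (Real.sqrt u * u)) (Ioo 0 1) ∧
    ∫ v in Ici c, Real.exp (-v / 4) / Real.sqrt v =
      Real.sqrt c * ∫ u in Ioo (0 : ℝ) 1, Real.exp (-(c / u) / 4) / (Real.sqrt u * u) := by
  have hd : ∀ u ∈ Ioo (0 : ℝ) 1,
      HasDerivWithinAt (fun u : ℝ => c / u) (-(c / u ^ 2)) (Ioo 0 1) u := by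
    intro u hu
    have := ((hasDerivAt_inv hu.1.ne').const_mul c).hasDerivWithinAt (s := Ioo (0 : ℝ) 1)
    refine (this.congr_deriv ?_)
    ring
  have hinj : InjOn (fun u : ℝ => c / u) (Ioo 0 1) := by
    intro u hu v hv h
    have hu0 := hu.1.ne'
    have hv0 := hv.1.ne'
    simp only at h
    rw [div_eq_div_iff hu0 hv0] at h
    exact (mul_left_cancel₀ hc.ne' h).symm
  have hg : ∀ u ∈ Ioo (0 : ℝ) 1,
      |-(c / u ^ 2)| • (Real.exp (-(c / u) / 4) / Real.sqrt (c / u)) =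
        Real.sqrt c * (Real.exp (-(c / u) / 4) / (Real.sqrt u * u)) := by
    intro u hu
    have hu0 := hu.1
    have hq : 0 < Real.sqrt u := Real.sqrt_pos.2 hu0
    have hqc : 0 < Real.sqrt c := Real.sqrt_pos.2 hc
    rw [abs_neg, abs_of_pos (by positivity), Real.sqrt_div hc.le, smul_eq_mul]
    generalize Real.exp (-(c / u) / 4) = E
    have e1 : u = Real.sqrt u ^ 2 := (Real.sq_sqrt hu0.le).symm
    have e2 : c = Real.sqrt c ^ 2 := (Real.sq_sqrt hc.le).symm
    generalize Real.sqrt u = s at *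
    generalize Real.sqrt c = t at *
    subst e1 e2
    field_simp
  have hint : IntegrableOn (fun v => Real.exp (-v / 4) / Real.sqrt v) (Ioi c) := by
    have h0 : IntegrableOn (fun v : ℝ => Real.exp (-(1 / 4) * v) * (1 / Real.sqrt c)) (Ioi c) :=
      (exp_neg_integrableOn_Ioi c (by norm_num)).mul_const _
    refine h0.mono' (Measurable.aestronglyMeasurable (by fun_prop)) ?_
    filter_upwards [ae_restrict_mem measurableSet_Ioi] with v hv
    have hqc : 0 < Real.sqrt c := Real.sqrt_pos.2 hc
    have : Real.sqrt c ≤ Real.sqrt v := Real.sqrt_le_sqrt (le_of_lt hv)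
    rw [Real.norm_of_nonneg (by positivity), div_eq_mul_one_div,
      show -(1 / 4) * v = -v / 4 by ring]
    gcongr
  constructor
  · have h := (integrableOn_image_iff_integrableOn_abs_deriv_smul measurableSet_Ioo hd hinj
      (fun v => Real.exp (-v / 4) / Real.sqrt v)).1 (by rw [image_const_div hc]; exact hint)
    have h' := (h.congr_fun hg measurableSet_Ioo).const_mul (1 / Real.sqrt c)
    refine IntegrableOn.congr_fun h' (fun u _ => ?_) measurableSet_Ioo
    have hqc : 0 < Real.sqrt c := Real.sqrt_pos.2 hc
    field_simp
  · have h := integral_image_eq_integral_abs_deriv_smul measurableSet_Ioo hd hinj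
      (fun v => Real.exp (-v / 4) / Real.sqrt v)
    rw [image_const_div hc] at h
    rw [integral_Ici_eq_integral_Ioi, h, setIntegral_congr_fun measurableSet_Ioo hg,
      integral_const_mul]

lemma integrableOn_inv_sqrt (k : ℝ) :
    IntegrableOn (fun u => k / Real.sqrt u) (Ioo (0 : ℝ) 1) := by
  have h : IntegrableOn (fun u : ℝ => k * u ^ (-(1 / 2) : ℝ)) (Ioo (0 : ℝ) 1) :=
    ((intervalIntegral.integrableOn_Ioo_rpow_iff one_pos).2 (by norm_num)).const_mul k
  refine h.congr_fun (fun u hu => ?_) measurableSet_Ioo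
  simp only
  rw [Real.rpow_neg hu.1.le, ← Real.sqrt_eq_rpow, div_eq_mul_inv]

/-- There are `C > 0` and `δ > 0` such that for all `x, y ∈ ℝ³` with
`0 < |x - y| < δ`:
`|I₀(x,y) - (1/((4π)^{3/2}|x-y|)) ∫_{b|x-y|²}^∞ e^{-u/4} u^{-1/2} du| ≤ C`. -/
theorem stmt7 (b : ℝ) (hb : 0 < b) :
    ∃ C > (0 : ℝ), ∃ δ > (0 : ℝ), ∀ x y : EuclideanSpace ℝ (Fin 3),
      0 < dist x y → dist x y < δ →
      |I0 b x y - 1 / ((4 * Real.pi) ^ ((3 : ℝ) / 2) * dist x y) *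
          ∫ u in Ici (b * dist x y ^ 2), Real.exp (-u / 4) / Real.sqrt u| ≤ C := by
  set M : ℝ := ∫ u in Ioo (0 : ℝ) 1, (b / 4 + 1) / Real.sqrt u with hM
  set K : ℝ := Real.sqrt b / (4 * Real.pi) ^ ((3 : ℝ) / 2) with hK
  have hK0 : 0 < K := by positivity
  have hM0 : 0 ≤ M := setIntegral_nonneg measurableSet_Ioo fun u _ => by positivity
  refine ⟨K * M + 1, by positivity, 1, one_pos, fun x y h0 h1 => ?_⟩
  set r := dist x y with hr
  have hr2 : r ^ 2 = (x 2 - y 2) ^ 2 + perpSq x y := by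
    rw [hr, EuclideanSpace.dist_eq, Real.sq_sqrt (by positivity), Fin.sum_univ_three]
    simp only [Real.dist_eq, sq_abs, perpSq]
    ring
  have hp : 0 ≤ perpSq x y := by unfold perpSq; positivity
  have hp1 : perpSq x y ≤ 1 := by nlinarith [sq_nonneg (x 2 - y 2)]
  obtain ⟨hint, heq⟩ := model_integral (c := b * r ^ 2) (by positivity)
  have hbd : ∀ u ∈ Ioo (0 : ℝ) 1, ‖kerInt b x y u -
      Real.exp (-(b * r ^ 2 / u) / 4) / (Real.sqrt u * u)‖ ≤ (b / 4 + 1) / Real.sqrt u := by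
    intro u hu
    rw [hr2]
    exact kernel_diff_bound hb (sq_nonneg _) hp hp1 hu.1 hu.2
  have hmeas : Measurable (kerInt b x y) := by
    unfold kerInt
    have h1 : Measurable Real.sinh := Real.continuous_sinh.measurable
    have h2 : Measurable Real.cosh := Real.continuous_cosh.measurable
    fun_prop
  have hdiff : IntegrableOn (fun u => kerInt b x y u -
      Real.exp (-(b * r ^ 2 / u) / 4) / (Real.sqrt u * u)) (Ioo 0 1) := by
    refine (integrableOn_inv_sqrt (b / 4 + 1)).mono' (Measurable.aestronglyMeasurable (by fun_prop)) ?_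
    filter_upwards [ae_restrict_mem measurableSet_Ioo] with u hu using hbd u hu
  have hker : IntegrableOn (kerInt b x y) (Ioo 0 1) :=
    (hdiff.add hint).congr_fun (fun u _ => by simp) measurableSet_Ioo
  have hmain : I0 b x y - 1 / ((4 * Real.pi) ^ ((3 : ℝ) / 2) * r) *
          ∫ u in Ici (b * r ^ 2), Real.exp (-u / 4) / Real.sqrt u
      = K * ∫ u in Ioo (0 : ℝ) 1, (kerInt b x y u -
          Real.exp (-(b * r ^ 2 / u) / 4) / (Real.sqrt u * u)) := by
    rw [integral_sub hker hint, heq, Real.sqrt_mul hb.le, Real.sqrt_sq h0.le, I0, ← hK, mul_sub,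
      hK]
    field_simp
  rw [hmain, abs_mul, abs_of_pos hK0]
  have hfin : |∫ u in Ioo (0 : ℝ) 1, (kerInt b x y u -
      Real.exp (-(b * r ^ 2 / u) / 4) / (Real.sqrt u * u))| ≤ M := by
    rw [← Real.norm_eq_abs]
    refine norm_integral_le_of_norm_le (integrableOn_inv_sqrt (b / 4 + 1)) ?_
    filter_upwards [ae_restrict_mem measurableSet_Ioo] with u hu using hbd u hu
  nlinarith [mul_le_mul_of_nonneg_left hfin hK0.le]
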